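/- If exactly one label l_i performs a movement from its start position S to its end position E (both candidate positions of its point p_i), while every other label is stationary, the stationary labels are pairwise non-overlapping, and each stationary label is non-overlapping with both S and E, then at most one stationary label overlaps l_i at some moment during the movement. -/

import Mathlib

/-! Two unit squares overlap exactly when their lower-left corners are at sup-distance less than
`1`. As each leg has length `1 < 2`, a label that overlaps the moving label somewhere on a leg
overlaps it at one of the ends of that leg, so a label that avoids `S` and `E` must overlap the
intermediate position `I`. A non-diagonal movement is therefore never obstructed. In a diagonal
movement, a label that overlaps `I` but not `S` is pushed to the side of `I` facing away from `S`,
and likewise for `E`. As the two legs are perpendicular, this confines every obstructing label to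
one half-open unit box of positions, and any two labels in that box overlap. -/

open Set

/-- The closed axis-aligned unit square with lower-left corner `a`. -/
def unitSq (a : ℝ × ℝ) : Set (ℝ × ℝ) :=
  Set.Icc a.1 (a.1 + 1) ×ˢ Set.Icc a.2 (a.2 + 1)

/-- Two unit squares, given by their lower-left corners, overlap if their interiors intersect. -/
def Overlap (a b : ℝ × ℝ) : Prop :=
  (interior (unitSq a) ∩ interior (unitSq b)).Nonempty

/-- `a` is the lower-left corner of one of the four candidate positions of point `p`
(the four closed unit squares having `p` as a corner). -/
def IsCandidate (p a : ℝ × ℝ) : Prop :=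
  a = p ∨ a = (p.1 - 1, p.2) ∨ a = (p.1, p.2 - 1) ∨ a = (p.1 - 1, p.2 - 1)

/-- Two unit squares (given by lower-left corners) share an edge. -/
def SharesEdge (a b : ℝ × ℝ) : Prop :=
  (a.1 = b.1 ∧ (a.2 - b.2 = 1 ∨ b.2 - a.2 = 1)) ∨
  (a.2 = b.2 ∧ (a.1 - b.1 = 1 ∨ b.1 - a.1 = 1))

/-- A movement of the unit-square label of point `p` from candidate position `S` to candidate
position `E`.  If `S` and `E` share an edge (a non-diagonal movement) we set `I = E` and the
label translates directly from `S` to `E`; if `S` and `E` are diagonally opposite (a diagonal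
movement) the label translates through the specified intermediate candidate position `I`,
which shares an edge with both `S` and `E`. -/
structure Movement where
  p : ℝ × ℝ
  S : ℝ × ℝ
  I : ℝ × ℝ
  E : ℝ × ℝ
  candS : IsCandidate p S
  candI : IsCandidate p I
  candE : IsCandidate p E
  legs : (I = E ∧ SharesEdge S E) ∨
    (SharesEdge S I ∧ SharesEdge I E ∧ S.1 ≠ E.1 ∧ S.2 ≠ E.2)

/-- A movement is diagonal if the start and end positions are diagonally opposite
(equivalently, the intermediate position differs from the end position). -/
def Movement.Diagonal (m : Movement) : Prop := m.I ≠ m.E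

/-- Position (lower-left corner) of a moving label at time `t` after the start of its movement:
unit-speed axis-aligned translation, one unit of time per axis-aligned leg; the label rests at
its start position before the movement begins and at its end position after it is finished. -/
noncomputable def Movement.pos (m : Movement) (t : ℝ) : ℝ × ℝ :=
  if t ≤ 0 then m.S
  else if t ≤ 1 then m.S + t • (m.I - m.S)
  else if t ≤ 2 then m.I + (t - 1) • (m.E - m.I)
  else m.E

/-- Duration of a movement: one unit of time per axis-aligned translation. -/
noncomputable def Movement.dur (m : Movement) : ℝ := if m.I = m.E then 1 else 2

theorem dist_lt_or_dist_lt_of_mem_segment {a b x y r : ℝ} (hab : dist a b < 2 * r)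
    (hy : y ∈ segment ℝ a b) (hxy : dist x y < r) : dist x a < r ∨ dist x b < r := by
  wlog hle : a ≤ b generalizing a b
  · exact (this (dist_comm a b ▸ hab) (segment_symm ℝ a b ▸ hy) (le_of_not_ge hle)).symm
  rw [segment_eq_Icc hle, mem_Icc] at hy
  simp only [Real.dist_eq, abs_lt] at *
  rcases le_total x ((a + b) / 2) with hx | hx
  · exact Or.inl ⟨by linarith, by linarith⟩
  · exact Or.inr ⟨by linarith, by linarith⟩

theorem ball_sdiff_ball_subset_Ico {a b r : ℝ} (hab : a ≤ b) :
    Metric.ball b r \ Metric.ball a r ⊆ Ico (a + r) (b + r) := by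
  intro x
  simp only [Real.ball_eq_Ioo, mem_sdiff, mem_Ioo, mem_Ico]
  grind

theorem ball_sdiff_ball_subset_Ioc {a b r : ℝ} (hba : b ≤ a) :
    Metric.ball b r \ Metric.ball a r ⊆ Ioc (b - r) (a - r) := by
  intro x
  simp only [Real.ball_eq_Ioo, mem_sdiff, mem_Ioo, mem_Ioc]
  grind

theorem dist_lt_dist_of_mem_ball_sdiff_ball {a b x y r : ℝ}
    (hx : x ∈ Metric.ball b r \ Metric.ball a r) (hy : y ∈ Metric.ball b r \ Metric.ball a r) :
    dist x y < dist a b := by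
  rw [Real.dist_eq, Real.dist_eq, abs_lt]
  rcases le_total a b with hab | hba
  · obtain ⟨hx₁, hx₂⟩ := ball_sdiff_ball_subset_Ico hab hx
    obtain ⟨hy₁, hy₂⟩ := ball_sdiff_ball_subset_Ico hab hy
    rw [abs_of_nonpos (sub_nonpos.mpr hab)]
    constructor <;> linarith
  · obtain ⟨hx₁, hx₂⟩ := ball_sdiff_ball_subset_Ioc hba hx
    obtain ⟨hy₁, hy₂⟩ := ball_sdiff_ball_subset_Ioc hba hy
    rw [abs_of_nonneg (sub_nonneg.mpr hba)]
    constructor <;> linarith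

theorem mem_ball_snd_sdiff_ball_snd {X Y : Type*} [PseudoMetricSpace X] [PseudoMetricSpace Y]
    {a b q : X × Y} {r : ℝ} (hab : a.1 = b.1) (hq : q ∈ Metric.ball b r \ Metric.ball a r) :
    q.2 ∈ Metric.ball b.2 r \ Metric.ball a.2 r := by
  simp only [mem_sdiff, Metric.mem_ball, Prod.dist_eq, max_lt_iff, hab] at *
  tauto

theorem mem_ball_fst_sdiff_ball_fst {X Y : Type*} [PseudoMetricSpace X] [PseudoMetricSpace Y]
    {a b q : X × Y} {r : ℝ} (hab : a.2 = b.2) (hq : q ∈ Metric.ball b r \ Metric.ball a r) :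
    q.1 ∈ Metric.ball b.1 r \ Metric.ball a.1 r := by
  simp only [mem_sdiff, Metric.mem_ball, Prod.dist_eq, max_lt_iff, hab] at *
  tauto

theorem dist_lt_or_dist_lt_of_mem_axisParallel_segment {a b q y : ℝ × ℝ} {r : ℝ}
    (hpar : a.1 = b.1 ∨ a.2 = b.2) (hab : dist a b < 2 * r) (hy : y ∈ segment ℝ a b)
    (hq : dist q y < r) : dist q a < r ∨ dist q b < r := by
  obtain ⟨a₁, a₂⟩ := a
  obtain ⟨b₁, b₂⟩ := b
  simp only [Prod.dist_eq, max_lt_iff] at hab hq ⊢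
  rcases hpar with rfl | rfl
  · rw [← Prod.image_mk_segment_right] at hy
    obtain ⟨y₂, hy₂, rfl⟩ := hy
    exact (dist_lt_or_dist_lt_of_mem_segment hab.2 hy₂ hq.2).imp (⟨hq.1, ·⟩) (⟨hq.1, ·⟩)
  · rw [← Prod.image_mk_segment_left] at hy
    obtain ⟨y₁, hy₁, rfl⟩ := hy
    exact (dist_lt_or_dist_lt_of_mem_segment hab.1 hy₁ hq.1).imp (⟨·, hq.2⟩) (⟨·, hq.2⟩)

theorem dist_lt_max_of_mem_ball_sdiff_union {a b c p q : ℝ × ℝ} {r : ℝ}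
    (hab : a.1 = b.1) (hcb : c.2 = b.2)
    (hp : p ∈ Metric.ball b r \ (Metric.ball a r ∪ Metric.ball c r))
    (hq : q ∈ Metric.ball b r \ (Metric.ball a r ∪ Metric.ball c r)) :
    dist p q < max (dist c b) (dist a b) := by
  rw [← sdiff_inter_sdiff] at hp hq
  have hfst : dist p.1 q.1 < dist c.1 b.1 :=
    dist_lt_dist_of_mem_ball_sdiff_ball (mem_ball_fst_sdiff_ball_fst hcb hp.2)
      (mem_ball_fst_sdiff_ball_fst hcb hq.2)
  have hsnd : dist p.2 q.2 < dist a.2 b.2 :=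
    dist_lt_dist_of_mem_ball_sdiff_ball (mem_ball_snd_sdiff_ball_snd hab hp.1)
      (mem_ball_snd_sdiff_ball_snd hab hq.1)
  calc dist p q = max (dist p.1 q.1) (dist p.2 q.2) := Prod.dist_eq
    _ < max (dist c.1 b.1) (dist a.2 b.2) := max_lt_max hfst hsnd
    _ ≤ max (dist c b) (dist a b) := max_le_max (le_max_left _ _) (le_max_right _ _)

theorem interior_unitSq (a : ℝ × ℝ) :
    interior (unitSq a) = Ioo a.1 (a.1 + 1) ×ˢ Ioo a.2 (a.2 + 1) := by
  rw [unitSq, interior_prod_eq, interior_Icc, interior_Icc]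

theorem nonempty_Ioo_inter_Ioo_add_one_iff (x y : ℝ) :
    (Ioo x (x + 1) ∩ Ioo y (y + 1)).Nonempty ↔ dist x y < 1 := by
  rw [Ioo_inter_Ioo, nonempty_Ioo, Real.dist_eq, abs_lt]
  grind

theorem overlap_iff_dist_lt_one (a b : ℝ × ℝ) : Overlap a b ↔ dist a b < 1 := by
  rw [Overlap, interior_unitSq, interior_unitSq, prod_inter_prod, prod_nonempty_iff,
    nonempty_Ioo_inter_Ioo_add_one_iff, nonempty_Ioo_inter_Ioo_add_one_iff, Prod.dist_eq,
    max_lt_iff]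

theorem sharesEdge_iff (a b : ℝ × ℝ) :
    SharesEdge a b ↔ (a.1 = b.1 ∨ a.2 = b.2) ∧ dist a b = 1 := by
  rw [SharesEdge, Prod.dist_eq, Real.dist_eq, Real.dist_eq]
  grind

theorem SharesEdge.symm {a b : ℝ × ℝ} (h : SharesEdge a b) : SharesEdge b a := by
  rw [sharesEdge_iff] at h ⊢
  exact ⟨h.1.imp Eq.symm Eq.symm, dist_comm a b ▸ h.2⟩

theorem SharesEdge.overlap_of_mem_segment {a b q y : ℝ × ℝ} (hab : SharesEdge a b)
    (hy : y ∈ segment ℝ a b) (hq : Overlap q y) : Overlap q a ∨ Overlap q b := by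
  simp only [overlap_iff_dist_lt_one] at hq ⊢
  obtain ⟨hpar, hdist⟩ := (sharesEdge_iff a b).mp hab
  exact dist_lt_or_dist_lt_of_mem_axisParallel_segment hpar (by linarith) hy hq

theorem overlap_of_overlap_corner {a b c q r : ℝ × ℝ}
    (hab : SharesEdge a b) (hcb : SharesEdge c b) (hfst : a.1 ≠ c.1) (hsnd : a.2 ≠ c.2)
    (hqb : Overlap q b) (hqa : ¬ Overlap q a) (hqc : ¬ Overlap q c)
    (hrb : Overlap r b) (hra : ¬ Overlap r a) (hrc : ¬ Overlap r c) : Overlap q r := by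
  obtain ⟨hab_par, hab_dist⟩ := (sharesEdge_iff a b).mp hab
  obtain ⟨hcb_par, hcb_dist⟩ := (sharesEdge_iff c b).mp hcb
  simp only [overlap_iff_dist_lt_one] at *
  have hq : q ∈ Metric.ball b 1 \ (Metric.ball a 1 ∪ Metric.ball c 1) := ⟨hqb, not_or_intro hqa hqc⟩
  have hr : r ∈ Metric.ball b 1 \ (Metric.ball a 1 ∪ Metric.ball c 1) := ⟨hrb, not_or_intro hra hrc⟩
  have hmax : max (dist c b) (dist a b) = 1 := by rw [hab_dist, hcb_dist, max_self]
  rcases hab_par with hab₁ | hab₂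
  · have hcb₂ : c.2 = b.2 := hcb_par.resolve_left fun hcb₁ ↦ hfst (hab₁.trans hcb₁.symm)
    exact hmax ▸ dist_lt_max_of_mem_ball_sdiff_union hab₁ hcb₂ hq hr
  · have hcb₁ : c.1 = b.1 := hcb_par.resolve_right fun hcb₂ ↦ hsnd (hab₂.trans hcb₂.symm)
    rw [union_comm] at hq hr
    rw [max_comm] at hmax
    exact hmax ▸ dist_lt_max_of_mem_ball_sdiff_union hcb₁ hab₂ hq hr

namespace Movement

variable {m : Movement} {q r : ℝ × ℝ} {t : ℝ}

theorem pos_mem_segment_union_segment (m : Movement) (t : ℝ) :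
    m.pos t ∈ segment ℝ m.S m.I ∪ segment ℝ m.I m.E := by
  unfold pos
  split_ifs with h0 h1 h2
  · exact Or.inl (left_mem_segment ℝ _ _)
  · rw [segment_eq_image']
    exact Or.inl ⟨t, ⟨by linarith, h1⟩, rfl⟩
  · rw [segment_eq_image' ℝ m.I]
    exact Or.inr ⟨t - 1, ⟨by linarith, by linarith⟩, rfl⟩
  · exact Or.inr (right_mem_segment ℝ _ _)

theorem overlap_I_of_overlap_pos (hS : ¬ Overlap q m.S) (hE : ¬ Overlap q m.E)
    (hpos : Overlap q (m.pos t)) : Overlap q m.I := by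
  have hSI : SharesEdge m.S m.I := by
    rcases m.legs with ⟨hIE, hSE⟩ | ⟨hSI, -⟩
    · exact hIE ▸ hSE
    · exact hSI
  rcases m.pos_mem_segment_union_segment t with hleg | hleg
  · exact (hSI.overlap_of_mem_segment hleg hpos).resolve_left hS
  · rcases m.legs with ⟨hIE, -⟩ | ⟨-, hIE, -⟩
    · rw [hIE, segment_same, mem_singleton_iff] at hleg
      exact absurd (hleg ▸ hpos) hE
    · exact (hIE.overlap_of_mem_segment hleg hpos).resolve_right hE

theorem overlap_of_overlap_pos {u : ℝ} (hqS : ¬ Overlap q m.S) (hqE : ¬ Overlap q m.E)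
    (hrS : ¬ Overlap r m.S) (hrE : ¬ Overlap r m.E)
    (hq : Overlap q (m.pos t)) (hr : Overlap r (m.pos u)) : Overlap q r := by
  have hqI : Overlap q m.I := overlap_I_of_overlap_pos hqS hqE hq
  have hrI : Overlap r m.I := overlap_I_of_overlap_pos hrS hrE hr
  rcases m.legs with ⟨hIE, -⟩ | ⟨hSI, hIE, hfst, hsnd⟩
  · exact absurd (hIE ▸ hqI) hqE
  · exact overlap_of_overlap_corner hSI hIE.symm hfst hsnd hqI hqS hqE hrI hrS hrE

end Movement

/-- If exactly one label performs a movement (with prescribed movement `m`) while every other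
label is stationary, the stationary labels are pairwise non-overlapping, and each stationary
label overlaps neither the start nor the end position of the moving label, then at most one
stationary label overlaps the moving label at some moment during the movement. -/
theorem at_most_one_stationary_overlap (m : Movement) {ι : Type*} (stat : ι → ℝ × ℝ)
    (hfree : ∀ i j : ι, i ≠ j → ¬ Overlap (stat i) (stat j))
    (hS : ∀ i, ¬ Overlap (stat i) m.S)
    (hE : ∀ i, ¬ Overlap (stat i) m.E) :
    {i : ι | ∃ t : ℝ, Overlap (stat i) (m.pos t)}.Subsingleton := by
  rintro i ⟨t, hi⟩ j ⟨u, hj⟩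
  by_contra hij
  exact hfree i j hij (Movement.overlap_of_overlap_pos (hS i) (hE i) (hS j) (hE j) hi hj)
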